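/- arXiv:math/9403216 — 4 statements merged into one kernel-verified Lean document; each statement's English description precedes it below -/
import Mathlib

section
/- (q-binomial theorem a la Heine) Let 0<q<1, a∈ℂ and z∈ℂ with |z|<1. Then Σ_{k=0}^∞ ((a;q)_k/(q;q)_k) z^k = (az;q)_∞/(z;q)_∞. -/
/-!
Heine's argument. Put `c k = (a;q)_k / (q;q)_k` and `F w = ∑ c k * w ^ k`, which converges for
`‖w‖ < 1` by the ratio test (`summable_coeff`). The recursion
`c (k+1) * (1 - q^(k+1)) = c k * (1 - a q^k)` turns into the functional equation
`(1 - w) F(w) = (1 - a w) F(q w)` (`functional_eq`). Iterating it gives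
`(z;q)_n F(z) = (az;q)_n F(q^n z)` (`iterated_eq`). As `n → ∞` the finite products tend to the
infinite ones and `F(q^n z) → F 0 = 1` by dominated convergence; dividing by `(z;q)_∞ ≠ 0` gives
the theorem.
-/

noncomputable section

/-- The finite q-shifted factorial `(a;q)_k`. -/
def qp (q a : ℂ) (k : ℕ) : ℂ := ∏ j ∈ Finset.range k, (1 - a * q ^ j)

/-- The infinite q-shifted factorial `(a;q)_∞`. -/
def qpi (q a : ℂ) : ℂ := ∏' j : ℕ, (1 - a * q ^ j)

open Filter Topology

/-- The coefficient `(a;q)_k / (q;q)_k` of the `q`-binomial series. -/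
def coeff (q a : ℂ) (k : ℕ) : ℂ := qp q a k / qp q q k

lemma one_sub_pow_ne_zero {q : ℂ} (hq : ‖q‖ < 1) (k : ℕ) : 1 - q ^ (k + 1) ≠ 0 := by
  intro h
  have h1 : ‖q ^ (k + 1)‖ = 1 := by rw [← sub_eq_zero.mp h, norm_one]
  rw [norm_pow] at h1
  exact (pow_lt_one₀ (norm_nonneg q) hq k.succ_ne_zero).ne h1

lemma coeff_succ (q a : ℂ) (k : ℕ) :
    coeff q a (k + 1) = coeff q a k * ((1 - a * q ^ k) / (1 - q ^ (k + 1))) := by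
  simp only [coeff, qp, Finset.prod_range_succ]
  rw [mul_div_mul_comm, pow_succ' q k]

lemma summable_coeff {q : ℂ} (hq : ‖q‖ < 1) (a : ℂ) {w : ℂ} (hw : ‖w‖ < 1) :
    Summable fun k => coeff q a k * w ^ k := by
  obtain ⟨r, hwr, hr⟩ := exists_between hw
  have hpow : Tendsto (fun k : ℕ => q ^ k) atTop (𝓝 0) :=
    tendsto_pow_atTop_nhds_zero_of_norm_lt_one hq
  have hlim : Tendsto (fun k : ℕ => ‖(1 - a * q ^ k) / (1 - q ^ (k + 1)) * w‖) atTop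
      (𝓝 ‖w‖) := by
    have h := ((((hpow.const_mul a).const_sub 1).div
      ((hpow.comp (tendsto_add_atTop_nat 1)).const_sub 1) (by simp)).mul_const w).norm
    simpa using h
  refine summable_of_ratio_norm_eventually_le hr ?_
  filter_upwards [hlim.eventually_lt_const hwr] with k hk
  rw [coeff_succ, show coeff q a k * ((1 - a * q ^ k) / (1 - q ^ (k + 1))) * w ^ (k + 1)
    = ((1 - a * q ^ k) / (1 - q ^ (k + 1)) * w) * (coeff q a k * w ^ k) by ring, norm_mul]
  exact mul_le_mul_of_nonneg_right hk.le (norm_nonneg _)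

lemma functional_eq {q : ℂ} (hq : ‖q‖ < 1) (a : ℂ) {w : ℂ} (hw : ‖w‖ < 1) :
    (1 - w) * ∑' k, coeff q a k * w ^ k = (1 - a * w) * ∑' k, coeff q a k * (q * w) ^ k := by
  have hqw : ‖q * w‖ < 1 := by
    rw [norm_mul]
    exact mul_lt_one_of_nonneg_of_lt_one_left (norm_nonneg _) hq hw.le
  have s1 := summable_coeff hq a hw
  have s2 := summable_coeff hq a hqw
  -- `F(w) - F(qw)` has no constant term, and its shifted series is `w (F(w) - a F(qw))`.
  have h1 := (s1.sub s2).tsum_eq_zero_add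
  have h2 : ∀ k, coeff q a (k + 1) * w ^ (k + 1) - coeff q a (k + 1) * (q * w) ^ (k + 1)
      = w * (coeff q a k * w ^ k - a * (coeff q a k * (q * w) ^ k)) := by
    intro k
    have := one_sub_pow_ne_zero hq k
    rw [coeff_succ, mul_pow, mul_pow]
    field_simp
    ring
  simp only [h2] at h1
  rw [s1.tsum_sub s2, tsum_mul_left, s1.tsum_sub (s2.mul_left a), tsum_mul_left] at h1
  simp only [pow_zero, sub_self, zero_add] at h1
  linear_combination h1

lemma iterated_eq {q : ℂ} (hq : ‖q‖ < 1) (a : ℂ) {z : ℂ} (hz : ‖z‖ < 1) (n : ℕ) :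
    qp q z n * ∑' k, coeff q a k * z ^ k
      = qp q (a * z) n * ∑' k, coeff q a k * (q ^ n * z) ^ k := by
  induction n with
  | zero => simp [qp]
  | succ n ih =>
    have hw : ‖q ^ n * z‖ < 1 := by
      rw [norm_mul, norm_pow]
      exact mul_lt_one_of_nonneg_of_lt_one_right (pow_le_one₀ (norm_nonneg _) hq.le)
        (norm_nonneg _) hz
    have hf := functional_eq hq a hw
    rw [← mul_assoc q, ← pow_succ'] at hf
    simp only [qp, Finset.prod_range_succ] at ih ⊢
    linear_combination (1 - z * q ^ n) * ih
      + (∏ j ∈ Finset.range n, (1 - a * z * q ^ j)) * hf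

lemma summable_norm_mul_pow {q : ℂ} (hq : ‖q‖ < 1) (b : ℂ) :
    Summable fun j : ℕ => ‖-(b * q ^ j)‖ := by
  simp only [norm_neg, norm_mul, norm_pow]
  exact (summable_geometric_of_lt_one (norm_nonneg q) hq).mul_left _

lemma tendsto_qp {q : ℂ} (hq : ‖q‖ < 1) (b : ℂ) :
    Tendsto (qp q b) atTop (𝓝 (qpi q b)) := by
  have h := (multipliable_one_add_of_summable (summable_norm_mul_pow hq b)).hasProd.tendsto_prod_nat
  simp only [← sub_eq_add_neg] at h
  exact h

lemma qpi_ne_zero {q : ℂ} (hq : ‖q‖ < 1) {z : ℂ} (hz : ‖z‖ < 1) : qpi q z ≠ 0 := by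
  have h := tprod_one_add_ne_zero_of_summable (f := fun j : ℕ => -(z * q ^ j)) (fun j hj => ?_)
    (summable_norm_mul_pow hq z)
  · simp only [← sub_eq_add_neg] at h
    exact h
  · have h1 : ‖z * q ^ j‖ = 1 := by
      rw [← sub_eq_zero.mp ((sub_eq_add_neg _ _).trans hj), norm_one]
    rw [norm_mul, norm_pow] at h1
    exact (mul_lt_one_of_nonneg_of_lt_one_left (norm_nonneg _) hz
      (pow_le_one₀ (norm_nonneg _) hq.le)).ne h1

lemma tendsto_series {q : ℂ} (hq : ‖q‖ < 1) (a : ℂ) {z : ℂ} (hz : ‖z‖ < 1) :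
    Tendsto (fun n : ℕ => ∑' k, coeff q a k * (q ^ n * z) ^ k) atTop (𝓝 1) := by
  have h0 : ∑' k, coeff q a k * (0 : ℂ) ^ k = 1 := by
    rw [tsum_eq_single 0 (fun k hk => by simp [hk])]
    simp [coeff, qp]
  rw [← h0]
  refine tendsto_tsum_of_dominated_convergence (summable_coeff hq a hz).norm (fun k => ?_)
    (Eventually.of_forall fun n k => ?_)
  · have h := (tendsto_pow_atTop_nhds_zero_of_norm_lt_one hq).mul_const z
    rw [zero_mul] at h
    exact (h.pow k).const_mul _
  · rw [norm_mul, norm_mul, norm_pow, norm_pow, norm_mul, norm_pow]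
    gcongr
    exact mul_le_of_le_one_left (norm_nonneg _) (pow_le_one₀ (norm_nonneg _) hq.le)

/-- The q-binomial theorem: for `0<q<1` and `|z|<1`,
`Σ_{k≥0} ((a;q)_k/(q;q)_k) z^k = (az;q)_∞/(z;q)_∞`. -/
theorem stmt1 (q : ℝ) (hq0 : 0 < q) (hq1 : q < 1) (a z : ℂ) (hz : ‖z‖ < 1) :
    HasSum (fun k : ℕ => qp (q : ℂ) a k / qp (q : ℂ) (q : ℂ) k * z ^ k)
      (qpi (q : ℂ) (a * z) / qpi (q : ℂ) z) := by
  have hq : ‖(q : ℂ)‖ < 1 := by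
    rw [Complex.norm_real, Real.norm_of_nonneg hq0.le]
    exact hq1
  have hl := (tendsto_qp hq z).mul_const (∑' k, coeff q a k * z ^ k)
  have hr := (tendsto_qp hq (a * z)).mul (tendsto_series hq a hz)
  rw [mul_one] at hr
  have h := tendsto_nhds_unique (hl.congr (iterated_eq hq a hz)) hr
  have hs := (summable_coeff hq a hz).hasSum
  rw [eq_div_of_mul_eq (qpi_ne_zero hq hz) ((mul_comm _ _).trans h)] at hs
  exact hs
end
end

section
/- Let 0<q<1. For every z∈ℂ one has Σ_{k=0}^∞ q^{k(k-1)/2} z^k/(q;q)_k = (-z;q)_∞ (evaluation of the q-exponential series E_q). -/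
/-!
Write `F(z)` for the series. Its terms satisfy `(1 - q^(k+1)) t_{k+1}(z) = z q^k t_k(z)`
(`qexpTerm_succ`), which yields both absolute convergence for every `z` (the ratio of consecutive
terms tends to `0`) and, by comparing coefficients in `F(z) - F(qz)`, the functional equation
`F(z) = (1 + z) F(qz)` (`qexp_functional`). Iterating the latter gives
`F(z) = ∏_{j<n} (1 + z q^j) · F(q^n z)`. As `n → ∞` the product tends to `(-z;q)_∞`, while
`F(q^n z) → F(0) = 1` by dominated convergence.
-/

noncomputable section

open Filter Topology

/-- The `k`-th term of the q-exponential series `E_q(z)`. -/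
def qexpTerm (q : ℝ) (z : ℂ) (k : ℕ) : ℂ :=
  (q : ℂ) ^ (k * (k - 1) / 2) * z ^ k / qp (q : ℂ) (q : ℂ) k

lemma one_sub_pow_succ_ne_zero {q : ℝ} (hq0 : 0 < q) (hq1 : q < 1) (k : ℕ) :
    (1 - (q : ℂ) ^ (k + 1)) ≠ 0 := by
  have h : q ^ (k + 1) < 1 := pow_lt_one₀ hq0.le hq1 (Nat.succ_ne_zero k)
  exact_mod_cast (sub_pos.2 h).ne'

lemma qexpTerm_succ {q : ℝ} (hq0 : 0 < q) (hq1 : q < 1) (z : ℂ) (k : ℕ) :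
    (1 - (q : ℂ) ^ (k + 1)) * qexpTerm q z (k + 1) = z * ((q : ℂ) ^ k * qexpTerm q z k) := by
  have h1 := one_sub_pow_succ_ne_zero hq0 hq1 k
  have hp : qp (q : ℂ) q (k + 1) = qp (q : ℂ) q k * (1 - (q : ℂ) ^ (k + 1)) := by
    rw [qp, Finset.prod_range_succ, ← qp, pow_succ']
  have he : (k + 1) * (k + 1 - 1) / 2 = k * (k - 1) / 2 + k := Nat.triangle_succ k
  have hk : qp (q : ℂ) q k ≠ 0 := by
    refine Finset.prod_ne_zero_iff.2 fun j _ => ?_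
    rw [← pow_succ']
    exact one_sub_pow_succ_ne_zero hq0 hq1 j
  rw [qexpTerm, qexpTerm, hp, he]
  field_simp
  ring

lemma qexpTerm_mul (q : ℝ) (w z : ℂ) (k : ℕ) :
    qexpTerm q (w * z) k = w ^ k * qexpTerm q z k := by
  rw [qexpTerm, qexpTerm, mul_pow]
  ring

lemma summable_qexpTerm {q : ℝ} (hq0 : 0 < q) (hq1 : q < 1) (z : ℂ) :
    Summable (qexpTerm q z) := by
  refine summable_of_ratio_norm_eventually_le (r := 1 / 2) (by norm_num) ?_
  have hlim : Tendsto (fun k : ℕ => ‖z‖ * q ^ k) atTop (𝓝 0) := by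
    simpa using (tendsto_pow_atTop_nhds_zero_of_lt_one hq0.le hq1).const_mul ‖z‖
  have hpos : 0 < (1 - q) / 2 := by linarith
  filter_upwards [hlim.eventually_le_const hpos] with k hk
  have hrec := congrArg norm (qexpTerm_succ hq0 hq1 z k)
  have hle : q ^ (k + 1) ≤ q := pow_le_of_le_one hq0.le hq1.le (Nat.succ_ne_zero k)
  have hnorm : ‖1 - (q : ℂ) ^ (k + 1)‖ = 1 - q ^ (k + 1) := by
    have : (1 - (q : ℂ) ^ (k + 1)) = ((1 - q ^ (k + 1) : ℝ) : ℂ) := by push_cast; rfl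
    rw [this, Complex.norm_real, Real.norm_of_nonneg (by linarith)]
  rw [norm_mul, norm_mul, norm_mul, norm_pow, Complex.norm_real, Real.norm_of_nonneg hq0.le,
    hnorm] at hrec
  have h1 : (1 - q) * ‖qexpTerm q z (k + 1)‖ ≤ (1 - q) * (1 / 2 * ‖qexpTerm q z k‖) :=
    calc (1 - q) * ‖qexpTerm q z (k + 1)‖
        ≤ (1 - q ^ (k + 1)) * ‖qexpTerm q z (k + 1)‖ := by gcongr
      _ = (‖z‖ * q ^ k) * ‖qexpTerm q z k‖ := by rw [hrec]; ring
      _ ≤ ((1 - q) / 2) * ‖qexpTerm q z k‖ := by gcongr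
      _ = (1 - q) * (1 / 2 * ‖qexpTerm q z k‖) := by ring
  exact le_of_mul_le_mul_left h1 (by linarith)

lemma qexp_functional {q : ℝ} (hq0 : 0 < q) (hq1 : q < 1) (z : ℂ) :
    ∑' k, qexpTerm q z k = (1 + z) * ∑' k, qexpTerm q (q * z) k := by
  have hs := summable_qexpTerm hq0 hq1 z
  have hs' := summable_qexpTerm hq0 hq1 (q * z)
  have hdiff : ∑' k, qexpTerm q z k - ∑' k, qexpTerm q (q * z) k
      = z * ∑' k, qexpTerm q (q * z) k := by
    rw [← hs.tsum_sub hs', (hs.sub hs').tsum_eq_zero_add, ← tsum_mul_left]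
    have h0 : qexpTerm q z 0 - qexpTerm q (q * z) 0 = 0 := by simp [qexpTerm]
    rw [h0, zero_add]
    refine tsum_congr fun k => ?_
    rw [qexpTerm_mul, qexpTerm_mul, ← qexpTerm_succ hq0 hq1]
    ring
  linear_combination hdiff

lemma qexp_iterate {q : ℝ} (hq0 : 0 < q) (hq1 : q < 1) (z : ℂ) (n : ℕ) :
    ∑' k, qexpTerm q z k
      = (∏ j ∈ Finset.range n, (1 - -z * (q : ℂ) ^ j)) * ∑' k, qexpTerm q ((q : ℂ) ^ n * z) k := by
  induction n with
  | zero => simp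
  | succ n ih =>
    rw [ih, qexp_functional hq0 hq1, Finset.prod_range_succ, ← mul_assoc (q : ℂ), ← pow_succ']
    ring

lemma tendsto_qexp_one {q : ℝ} (hq0 : 0 < q) (hq1 : q < 1) (z : ℂ) :
    Tendsto (fun n : ℕ => ∑' k, qexpTerm q ((q : ℂ) ^ n * z) k) atTop (𝓝 1) := by
  have hq : ‖(q : ℂ)‖ < 1 := by rwa [Complex.norm_real, Real.norm_of_nonneg hq0.le]
  have h0 : ∑' k, qexpTerm q 0 k = 1 := by
    rw [tsum_eq_single 0 fun k hk => by simp [qexpTerm, hk]]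
    simp [qexpTerm, qp]
  rw [← h0]
  refine tendsto_tsum_of_dominated_convergence (bound := fun k => ‖qexpTerm q z k‖)
    (summable_qexpTerm hq0 hq1 z).norm (fun k => ?_) (Eventually.of_forall fun n k => ?_)
  · have hc : Continuous fun w : ℂ => qexpTerm q w k := by
      unfold qexpTerm
      fun_prop
    have hw : Tendsto (fun n : ℕ => (q : ℂ) ^ n * z) atTop (𝓝 0) := by
      simpa using (tendsto_pow_atTop_nhds_zero_of_norm_lt_one hq).mul_const z
    exact (hc.tendsto 0).comp hw
  · rw [qexpTerm_mul, norm_mul, norm_pow, norm_pow]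
    exact mul_le_of_le_one_left (norm_nonneg _)
      (pow_le_one₀ (by positivity) (pow_le_one₀ (norm_nonneg _) hq.le))

lemma tendsto_qpi {q : ℝ} (hq0 : 0 < q) (hq1 : q < 1) (a : ℂ) :
    Tendsto (fun n : ℕ => ∏ j ∈ Finset.range n, (1 - a * (q : ℂ) ^ j)) atTop
      (𝓝 (qpi (q : ℂ) a)) := by
  have hq : ‖(q : ℂ)‖ < 1 := by rwa [Complex.norm_real, Real.norm_of_nonneg hq0.le]
  have hs : Summable fun j : ℕ => -(a * (q : ℂ) ^ j) :=
    ((summable_geometric_of_norm_lt_one hq).mul_left a).neg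
  have hm : Multipliable fun j : ℕ => 1 - a * (q : ℂ) ^ j := by
    simpa only [sub_eq_add_neg] using Complex.multipliable_one_add_of_summable hs
  exact hm.tendsto_prod_tprod_nat

/-- Evaluation of the q-exponential series `E_q`: for `0<q<1` and all `z ∈ ℂ`,
`Σ_{k≥0} q^{k(k-1)/2} z^k/(q;q)_k = (-z;q)_∞`. -/
theorem stmt2 (q : ℝ) (hq0 : 0 < q) (hq1 : q < 1) (z : ℂ) :
    HasSum (fun k : ℕ => (q : ℂ) ^ (k * (k - 1) / 2) * z ^ k / qp (q : ℂ) (q : ℂ) k)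
      (qpi (q : ℂ) (-z)) := by
  have hlim := (tendsto_qpi hq0 hq1 (-z)).mul (tendsto_qexp_one hq0 hq1 z)
  simp only [← qexp_iterate hq0 hq1 z, mul_one] at hlim
  rw [← tendsto_nhds_unique tendsto_const_nhds hlim]
  exact (summable_qexpTerm hq0 hq1 z).hasSum
end
end

section
/- (Jackson's transformation of a terminating ₂φ₁ into a ₃φ₂) Let 0<q<1, n∈ℤ_{≥0}, b,c,z∈ℂ with b≠0, z≠0, c ∉ {1,q^{-1},…,q^{-n+1}} and cq/(bz) ∉ {1,q^{-1},…,q^{-n+1}}. Then ₂φ₁(q^{-n}, b; c; q, z) = (q^{-n}bz/c;q)_n · ₃φ₂(q^{-n}, c/b, 0; c, cq b^{-1} z^{-1}; q, q). -/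
/-!
Put `x = b z / c` and `A n m = (q^{-n};q)_m / (q;q)_m` (`qAcoef`). Both sides are polynomials in `x`, and the
identity results from expanding the right-hand side in powers of `x`.

* The q-Chu–Vandermonde sum (`qAcoef_vandermonde`) turns the coefficient of the left-hand side into
  `(b;q)_m (c/b)^m / (c;q)_m = ∑ₖ A m k (c/b;q)_k / (c;q)_k q^k`.
* After the two sums are interchanged, the inner sum `∑ₘ A n m A m k x^m` is evaluated in closed
  product form (`qAcoef_inner`). The case `k = 0` is the terminating q-binomial theorem, and the
  step in `k` uses `A m (k+1) (1 - q^{k+1}) = A m k (1 - q^{k-m})`, which relates the sum at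
  `k + 1` to the sums at `k` evaluated at `x` and `x / q`.
* Reversing factors identifies this product with
  `A n k (q^{-n} x;q)_n / (q/x;q)_k` (`qp_reverse`); times `(c/b;q)_k / (c;q)_k q^k`, this is the
  `k`-th term of the right-hand side.

The q-binomial theorem and the q-Chu–Vandermonde sum are both instances of one consequence of the
q-Pascal rule, `qAcoef_sum_succ`.
-/

noncomputable section

/-- The basic hypergeometric series `₂φ₁(a,b;c;q,z)`. -/
def phi21 (q a b c z : ℂ) : ℂ :=
  ∑' k : ℕ, qp q a k * qp q b k / (qp q c k * qp q q k) * z ^ k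

/-- The basic hypergeometric series `₃φ₂(a₁,a₂,a₃;b₁,b₂;q,z)`. -/
def phi32 (q a1 a2 a3 b1 b2 z : ℂ) : ℂ :=
  ∑' k : ℕ, qp q a1 k * qp q a2 k * qp q a3 k / (qp q b1 k * qp q b2 k * qp q q k) * z ^ k

lemma qp_zero (q a : ℂ) : qp q a 0 = 1 := by simp [qp]

lemma qp_succ (q a : ℂ) (k : ℕ) : qp q a (k + 1) = qp q a k * (1 - a * q ^ k) := by
  simp [qp, Finset.prod_range_succ]

lemma qp_succ_left (q a : ℂ) (k : ℕ) : qp q a (k + 1) = (1 - a) * qp q (a * q) k := by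
  simp only [qp, Finset.prod_range_succ']
  rw [mul_comm]
  congr 1
  · simp
  · exact Finset.prod_congr rfl fun j _ => by ring

lemma qp_ne_zero {q a : ℂ} {k : ℕ} (h : ∀ j < k, a * q ^ j ≠ 1) : qp q a k ≠ 0 :=
  Finset.prod_ne_zero_iff.2 fun j hj =>
    sub_ne_zero.2 fun e => h j (Finset.mem_range.1 hj) e.symm

lemma qp_inv_pow_eq_zero {q : ℂ} (hq : q ≠ 0) {n m : ℕ} (h : n < m) :
    qp q (q ^ n)⁻¹ m = 0 :=
  Finset.prod_eq_zero (Finset.mem_range.2 h) (by field_simp; simp)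

/-- The coefficient `(q^{-n};q)_m / (q;q)_m`, a signed and rescaled q-binomial coefficient. -/
def qAcoef (q : ℂ) (n m : ℕ) : ℂ := qp q (q ^ n)⁻¹ m / qp q q m

lemma qAcoef_zero_right (q : ℂ) (n : ℕ) : qAcoef q n 0 = 1 := by simp [qAcoef, qp_zero]

lemma qAcoef_eq_zero {q : ℂ} (hq : q ≠ 0) {n m : ℕ} (h : n < m) : qAcoef q n m = 0 := by
  simp [qAcoef, qp_inv_pow_eq_zero hq h]

lemma qAcoef_succ_right (q : ℂ) (n m : ℕ) :
    qAcoef q n (m + 1) = qAcoef q n m * (1 - (q ^ n)⁻¹ * q ^ m) / (1 - q ^ (m + 1)) := by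
  rw [qAcoef, qAcoef, qp_succ, qp_succ, ← pow_succ', div_mul_eq_div_div]
  ring

/-- The q-Pascal rule. -/
lemma qAcoef_pascal {q : ℂ} (hq : q ≠ 0) (hq' : ∀ k : ℕ, 1 - q ^ (k + 1) ≠ 0) (n m : ℕ) :
    qAcoef q (n + 1) (m + 1) = qAcoef q n (m + 1) - (q ^ (n + 1))⁻¹ * qAcoef q n m := by
  have h := hq' m
  have e : (q ^ (n + 1))⁻¹ * q = (q ^ n)⁻¹ := by rw [pow_succ]; field_simp
  have e1 : qAcoef q (n + 1) (m + 1) =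
      (1 - (q ^ (n + 1))⁻¹) * qAcoef q n m / (1 - q ^ (m + 1)) := by
    rw [qAcoef, qAcoef, qp_succ_left, e, qp_succ, ← pow_succ', div_mul_eq_div_div]
    ring
  rw [e1, qAcoef_succ_right, eq_sub_iff_add_eq, div_add' _ _ _ h, ← e]
  ring

lemma qAcoef_sum_extend {q : ℂ} (hq : q ≠ 0) {n N : ℕ} (h : n ≤ N) (f : ℕ → ℂ) :
    ∑ k ∈ Finset.range (n + 1), qAcoef q n k * f k =
      ∑ k ∈ Finset.range (N + 1), qAcoef q n k * f k := by
  apply Finset.sum_subset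
  · exact Finset.range_mono (by omega)
  · intro k _ hk
    rw [qAcoef_eq_zero hq (by simpa using hk), zero_mul]

/-- Summed form of the q-Pascal rule, against an arbitrary sequence `f`. -/
lemma qAcoef_sum_succ {q : ℂ} (hq : q ≠ 0) (hq' : ∀ k : ℕ, 1 - q ^ (k + 1) ≠ 0) (n : ℕ)
    (f : ℕ → ℂ) :
    ∑ k ∈ Finset.range (n + 2), qAcoef q (n + 1) k * f k =
      ∑ k ∈ Finset.range (n + 1), qAcoef q n k * f k -
        (q ^ (n + 1))⁻¹ * ∑ k ∈ Finset.range (n + 1), qAcoef q n k * f (k + 1) := by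
  rw [qAcoef_sum_extend hq (Nat.le_succ n), Finset.sum_range_succ', Finset.sum_range_succ' _ (n + 1),
    Finset.mul_sum, add_sub_right_comm, ← Finset.sum_sub_distrib]
  simp only [qAcoef_zero_right, qAcoef_pascal hq hq']
  congr 1
  exact Finset.sum_congr rfl fun k _ => by ring

/-- The terminating q-binomial theorem. -/
lemma qAcoef_binomial {q : ℂ} (hq : q ≠ 0) (hq' : ∀ k : ℕ, 1 - q ^ (k + 1) ≠ 0) (n : ℕ) (x : ℂ) :
    ∑ m ∈ Finset.range (n + 1), qAcoef q n m * x ^ m = qp q ((q ^ n)⁻¹ * x) n := by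
  induction n with
  | zero => simp [qAcoef_zero_right, qp_zero]
  | succ n ih =>
    have e : (q ^ (n + 1))⁻¹ * x * q = (q ^ n)⁻¹ * x := by rw [pow_succ]; field_simp
    have e2 : ∑ k ∈ Finset.range (n + 1), qAcoef q n k * x ^ (k + 1) =
        x * ∑ m ∈ Finset.range (n + 1), qAcoef q n m * x ^ m := by
      rw [Finset.mul_sum]
      exact Finset.sum_congr rfl fun k _ => by ring
    rw [qAcoef_sum_succ hq hq', e2, ih, qp_succ_left, e]
    ring

/-- The q-Chu–Vandermonde sum `₂φ₁(q^{-m}, a; c; q, q)`, with `(c/a;q)_m a^m` written as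
`∏ (a - c q^j)`. -/
lemma qAcoef_vandermonde {q : ℂ} (hq : q ≠ 0) (hq' : ∀ k : ℕ, 1 - q ^ (k + 1) ≠ 0) (m : ℕ)
    (a c : ℂ) (hc : ∀ j < m, c * q ^ j ≠ 1) :
    ∑ k ∈ Finset.range (m + 1), qAcoef q m k * (qp q a k / qp q c k * q ^ k) =
      (∏ j ∈ Finset.range m, (a - c * q ^ j)) / qp q c m := by
  induction m generalizing a c with
  | zero => simp [qAcoef_zero_right, qp_zero]
  | succ m ih =>
    have hc0 : 1 - c ≠ 0 := sub_ne_zero.2 fun e => hc 0 (by omega) (by simp [← e])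
    have hcq : ∀ j < m, c * q * q ^ j ≠ 1 := fun j hj => by
      have := hc (j + 1) (by omega)
      rwa [pow_succ', ← mul_assoc] at this
    have e : ∑ k ∈ Finset.range (m + 1),
        qAcoef q m k * (qp q a (k + 1) / qp q c (k + 1) * q ^ (k + 1)) =
        q * (1 - a) / (1 - c) * ∑ k ∈ Finset.range (m + 1),
          qAcoef q m k * (qp q (a * q) k / qp q (c * q) k * q ^ k) := by
      rw [Finset.mul_sum]
      refine Finset.sum_congr rfl fun k _ => ?_
      rw [qp_succ_left q a, qp_succ_left q c, mul_div_mul_comm]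
      ring
    have ep : ∏ j ∈ Finset.range m, (a * q - c * q * q ^ j) =
        q ^ m * ∏ j ∈ Finset.range m, (a - c * q ^ j) := by
      rw [← Finset.card_range m, ← Finset.prod_const, Finset.card_range,
        ← Finset.prod_mul_distrib]
      exact Finset.prod_congr rfl fun j _ => by ring
    have h1 : qp q c m ≠ 0 := qp_ne_zero fun j hj => hc j (by omega)
    have h2 : qp q (c * q) m ≠ 0 := qp_ne_zero hcq
    have h3 : 1 - c * q ^ m ≠ 0 := sub_ne_zero.2 fun e => hc m (by omega) e.symm
    -- the two ways of splitting a factor off `(c;q)_{m+1}`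
    have h4 : (1 - c) * qp q (c * q) m = qp q c m * (1 - c * q ^ m) := by
      rw [← qp_succ_left, qp_succ]
    have h5 : qp q (c * q) m = qp q c m * (1 - c * q ^ m) / (1 - c) := by
      rw [← h4]; field_simp
    rw [qAcoef_sum_succ hq hq', e, ih a c fun j hj => hc j (by omega),
      ih (a * q) (c * q) hcq, ep, h5, Finset.prod_range_succ, qp_succ, pow_succ]
    field_simp
    ring

/-- The inner sum after interchanging summations, with `n = k + d`. -/
lemma qAcoef_inner {q : ℂ} (hq : q ≠ 0) (hq' : ∀ k : ℕ, 1 - q ^ (k + 1) ≠ 0) (n k d : ℕ)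
    (h : k + d = n) (x : ℂ) :
    ∑ m ∈ Finset.range (n + 1), qAcoef q n m * (qAcoef q m k * x ^ m) =
      qAcoef q n k * (∏ j ∈ Finset.range k, (-x * (q ^ (j + 1))⁻¹)) *
        qp q ((q ^ n)⁻¹ * x) d := by
  induction k generalizing d x with
  | zero =>
    obtain rfl : d = n := by omega
    simpa [qAcoef_zero_right] using qAcoef_binomial hq hq' d x
  | succ k ih =>
    have e : ∑ m ∈ Finset.range (n + 1), qAcoef q n m * (qAcoef q m (k + 1) * x ^ m) =
        (∑ m ∈ Finset.range (n + 1), qAcoef q n m * (qAcoef q m k * x ^ m) -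
          q ^ k * ∑ m ∈ Finset.range (n + 1), qAcoef q n m * (qAcoef q m k * (x / q) ^ m)) /
          (1 - q ^ (k + 1)) := by
      rw [Finset.mul_sum, ← Finset.sum_sub_distrib, Finset.sum_div]
      refine Finset.sum_congr rfl fun m _ => ?_
      rw [qAcoef_succ_right, div_pow]
      ring
    have ep : ∏ j ∈ Finset.range k, (-(x / q) * (q ^ (j + 1))⁻¹) =
        (q ^ k)⁻¹ * ∏ j ∈ Finset.range k, (-x * (q ^ (j + 1))⁻¹) := by
      rw [← inv_pow, ← Finset.card_range k, ← Finset.prod_const, Finset.card_range,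
        ← Finset.prod_mul_distrib]
      exact Finset.prod_congr rfl fun j _ => by ring
    have e3 : (q ^ n)⁻¹ * (x / q) * q = (q ^ n)⁻¹ * x := by field_simp
    have e4 : (q ^ n)⁻¹ * x * q ^ d = x * (q ^ (k + 1))⁻¹ := by
      rw [← h, pow_add]; field_simp
    have hk := hq' k
    rw [e, ih (d + 1) (by omega), ih (d + 1) (by omega), ep, qp_succ_left q (_ * (x / q)), e3,
      qp_succ, e4, Finset.prod_range_succ, qAcoef_succ_right]
    field_simp
    ring

/-- Reversal of the factors of `(q/x;q)_k`, with `n = k + d`. -/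
lemma qp_reverse {q : ℂ} (hq : q ≠ 0) {x : ℂ} (hx : x ≠ 0) (n k d : ℕ) (h : k + d = n) :
    (∏ j ∈ Finset.range k, (-x * (q ^ (j + 1))⁻¹)) * qp q ((q ^ n)⁻¹ * x) d * qp q (q / x) k =
      qp q ((q ^ n)⁻¹ * x) n := by
  induction k generalizing d with
  | zero =>
    obtain rfl : d = n := by omega
    simp [qp_zero]
  | succ k ih =>
    have e4 : (q ^ n)⁻¹ * x * q ^ d = x * (q ^ (k + 1))⁻¹ := by
      rw [← h, pow_add]; field_simp
    have e5 : -x * (q ^ (k + 1))⁻¹ * (1 - q / x * q ^ k) = 1 - x * (q ^ (k + 1))⁻¹ := by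
      field_simp
      ring
    rw [← ih (d + 1) (by omega), Finset.prod_range_succ, qp_succ q (q / x), qp_succ q _ d, e4, ← e5]
    ring

/-- Jackson's transformation of a terminating `₂φ₁` into a `₃φ₂`:
`₂φ₁(q^{-n}, b; c; q, z) = (q^{-n}bz/c;q)_n ₃φ₂(q^{-n}, c/b, 0; c, cq/(bz); q, q)`
for `0<q<1`, `b ≠ 0`, `z ≠ 0`, `c ≠ 0`, and the lower parameters `c`, `cq/(bz)`
avoiding `{1, q^{-1}, …, q^{-n+1}}`. -/
theorem stmt7 (q : ℝ) (hq0 : 0 < q) (hq1 : q < 1) (n : ℕ) (b c z : ℂ)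
    (hb : b ≠ 0) (hz : z ≠ 0) (hc0 : c ≠ 0)
    (hc : ∀ j : ℕ, j < n → c * (q : ℂ) ^ j ≠ 1)
    (hcz : ∀ j : ℕ, j < n → c * (q : ℂ) / (b * z) * (q : ℂ) ^ j ≠ 1) :
    phi21 (q : ℂ) (((q : ℂ) ^ n)⁻¹) b c z =
      qp (q : ℂ) (((q : ℂ) ^ n)⁻¹ * b * z / c) n *
        phi32 (q : ℂ) (((q : ℂ) ^ n)⁻¹) (c / b) 0 c (c * (q : ℂ) / (b * z)) (q : ℂ) := by
  have hq : (q : ℂ) ≠ 0 := by exact_mod_cast hq0.ne'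
  have hq' : ∀ k : ℕ, 1 - (q : ℂ) ^ (k + 1) ≠ 0 := fun k => by
    have : (1 : ℝ) - q ^ (k + 1) ≠ 0 := (sub_pos.2 (pow_lt_one₀ hq0.le hq1 (by omega))).ne'
    exact_mod_cast this
  generalize (q : ℂ) = q at *
  have hx : b * z / c ≠ 0 := div_ne_zero (mul_ne_zero hb hz) hc0
  have hxq : c * q / (b * z) = q / (b * z / c) := by field_simp
  have hxn : (q ^ n)⁻¹ * b * z / c = (q ^ n)⁻¹ * (b * z / c) := by ring
  rw [hxq] at hcz ⊢
  rw [hxn]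
  have hzx : z = b * z / c * (c / b) := by field_simp
  rw [phi21, phi32, tsum_eq_sum (s := Finset.range (n + 1)),
    tsum_eq_sum (s := Finset.range (n + 1))]
  rotate_left
  · intro k hk
    rw [qp_inv_pow_eq_zero hq (by simpa using hk)]
    simp
  · intro k hk
    rw [qp_inv_pow_eq_zero hq (by simpa using hk)]
    simp
  generalize b * z / c = x at *
  have hqp0 : ∀ k, qp q 0 k = 1 := fun k => by simp [qp]
  have left : ∀ m ∈ Finset.range (n + 1),
      qp q (q ^ n)⁻¹ m * qp q b m / (qp q c m * qp q q m) * z ^ m =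
        ∑ k ∈ Finset.range (n + 1),
          qp q (c / b) k / qp q c k * q ^ k * (qAcoef q n m * (qAcoef q m k * x ^ m)) := by
    intro m hm
    have hmn : m ≤ n := by simpa [Nat.lt_succ_iff] using hm
    have hV := qAcoef_vandermonde hq hq' m (c / b) c fun j hj => hc j (by omega)
    have hprod : ∏ j ∈ Finset.range m, (c / b - c * q ^ j) = (c / b) ^ m * qp q b m := by
      rw [qp, ← Finset.card_range m, ← Finset.prod_const, Finset.card_range,
        ← Finset.prod_mul_distrib]
      exact Finset.prod_congr rfl fun j _ => by field_simp
    rw [qAcoef_sum_extend hq hmn, hprod] at hV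
    calc _ = qAcoef q n m * x ^ m * ((c / b) ^ m * qp q b m / qp q c m) := by
          rw [hzx, mul_pow, qAcoef]
          ring
      _ = _ := by
          rw [← hV, Finset.mul_sum]
          exact Finset.sum_congr rfl fun k _ => by ring
  rw [Finset.sum_congr rfl left, Finset.sum_comm, Finset.mul_sum]
  refine Finset.sum_congr rfl fun k hk => ?_
  have hkn : k ≤ n := by simpa [Nat.lt_succ_iff] using hk
  have hne : qp q (q / x) k ≠ 0 := qp_ne_zero fun j hj => hcz j (by omega)
  rw [← Finset.mul_sum, qAcoef_inner hq hq' n k (n - k) (by omega),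
    ← qp_reverse hq hx n k (n - k) (by omega), hqp0, qAcoef]
  field_simp
end
end

section
/- (Jacobi triple product identity) Let 0<q<1 and z∈ℂ with z≠0. Then Σ_{k=-∞}^∞ (-1)^k q^{k(k-1)/2} z^k = (q;q)_∞ (z;q)_∞ (q/z;q)_∞. -/
/-!
The identity is the limit `n → ∞` of its finite form
`∏_{j<n} (1 - z q^j) · ∏_{j<n} (1 - q^{j+1}/z)
  = Σ_k (q;q)_{2n} / ((q;q)_{n+k} (q;q)_{n-k}) · (-1)^k q^{k(k-1)/2} z^k`,
where `1/(q;q)_m = 0` for `m < 0`, so that the sum over `k ∈ ℤ` has finite support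
(`hasSum_finite_form`). The finite form is proved by induction on `n`: multiplying by
`(1 - z q^n)(1 - q^{n+1}/z)` shifts `k` by `±1`, and the contiguity relations
`1/(q;q)_{m-1} = (1 - q^m)/(q;q)_m` and `jtpTerm_succ` turn the step into a polynomial identity.
The coefficient of the `k`-th term converges to `1/(q;q)_∞` and is bounded uniformly in `n` and `k`,
so dominated convergence (Tannery's theorem) over the absolutely convergent theta series gives
`(z;q)_∞ (q/z;q)_∞ = (1/(q;q)_∞) Σ_k (-1)^k q^{k(k-1)/2} z^k`.
-/

noncomputable section

/-- The term of the theta series: `(-1)^k q^{k(k-1)/2} z^k`, `k ∈ ℤ`. -/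
def jtpTerm (q z : ℂ) (k : ℤ) : ℂ := (-1 : ℂ) ^ k * q ^ (k * (k - 1) / 2) * z ^ k

open Filter Topology

/-- The finite q-shifted factorial `(a;q)_n`. -/
def qPochFin (q a : ℂ) (n : ℕ) : ℂ := ∏ j ∈ Finset.range n, (1 - a * q ^ j)

/-- `1/(q;q)_m` for `m ∈ ℤ`, with the usual convention that it vanishes for `m < 0`. -/
def invPoch (q : ℂ) (m : ℤ) : ℂ := if 0 ≤ m then (qPochFin q q m.toNat)⁻¹ else 0

lemma qPochFin_succ (q a : ℂ) (n : ℕ) :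
    qPochFin q a (n + 1) = qPochFin q a n * (1 - a * q ^ n) :=
  Finset.prod_range_succ _ _

lemma one_sub_mul_pow_ne_zero {q : ℂ} (hq1 : ‖q‖ < 1) (j : ℕ) : 1 - q * q ^ j ≠ 0 := by
  intro h
  have h1 : ‖q ^ (j + 1)‖ = 1 := by
    rw [pow_succ', ← sub_eq_zero.mp h, norm_one]
  rw [norm_pow] at h1
  exact (pow_lt_one₀ (norm_nonneg q) hq1 (Nat.succ_ne_zero j)).ne h1

lemma qPochFin_ne_zero {q : ℂ} (hq1 : ‖q‖ < 1) (n : ℕ) : qPochFin q q n ≠ 0 :=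
  Finset.prod_ne_zero_iff.mpr fun j _ => one_sub_mul_pow_ne_zero hq1 j

lemma summable_norm_neg_mul_pow {q : ℂ} (hq1 : ‖q‖ < 1) (a : ℂ) :
    Summable fun j : ℕ => ‖-(a * q ^ j)‖ := by
  simpa [norm_mul, norm_pow] using
    (summable_geometric_of_lt_one (norm_nonneg q) hq1).mul_left ‖a‖

lemma tendsto_qPochFin {q : ℂ} (hq1 : ‖q‖ < 1) (a : ℂ) :
    Tendsto (qPochFin q a) atTop (𝓝 (qpi q a)) := by
  have h := (multipliable_one_add_of_summable
    (summable_norm_neg_mul_pow hq1 a)).hasProd.tendsto_prod_nat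
  simp only [← sub_eq_add_neg] at h
  exact h

lemma qpi_self_ne_zero {q : ℂ} (hq1 : ‖q‖ < 1) : qpi q q ≠ 0 := by
  have h := tprod_one_add_ne_zero_of_summable (f := fun j : ℕ => -(q * q ^ j))
    (fun j => by rw [← sub_eq_add_neg]; exact one_sub_mul_pow_ne_zero hq1 j)
    (summable_norm_neg_mul_pow hq1 q)
  simp only [← sub_eq_add_neg] at h
  exact h

/-- The contiguity relation, valid for every integer `m` thanks to the convention at `m < 0`. -/
lemma invPoch_sub_one {q : ℂ} (hq1 : ‖q‖ < 1) (m : ℤ) :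
    invPoch q (m - 1) = (1 - q ^ m) * invPoch q m := by
  rcases lt_trichotomy m 0 with h | rfl | h
  · rw [invPoch, invPoch, if_neg (by omega), if_neg (by omega), mul_zero]
  · simp [invPoch]
  · obtain ⟨n, rfl⟩ : ∃ n : ℕ, m = (n : ℤ) + 1 := ⟨(m - 1).toNat, by omega⟩
    have e1 : ((n : ℤ) + 1 - 1).toNat = n := by omega
    have e2 : ((n : ℤ) + 1).toNat = n + 1 := by omega
    rw [invPoch, invPoch, if_pos (by omega), if_pos (by omega), e1, e2, qPochFin_succ]
    have h1 := one_sub_mul_pow_ne_zero hq1 n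
    have h2 := qPochFin_ne_zero hq1 n
    have e3 : q ^ ((n : ℤ) + 1) = q * q ^ n := by
      rw [show ((n : ℤ) + 1) = ((n + 1 : ℕ) : ℤ) by push_cast; rfl, zpow_natCast, pow_succ']
    rw [e3]
    field_simp

lemma tendsto_invPoch {q : ℂ} (hq1 : ‖q‖ < 1) :
    Tendsto (invPoch q) atTop (𝓝 (qpi q q)⁻¹) := by
  have h := ((tendsto_qPochFin hq1 q).inv₀ (qpi_self_ne_zero hq1)).comp
    (tendsto_atTop_atTop.mpr fun b : ℕ => ⟨(b : ℤ), fun a ha => by omega⟩ :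
      Tendsto Int.toNat atTop atTop)
  refine h.congr' ?_
  filter_upwards [eventually_ge_atTop (0 : ℤ)] with m hm
  simp [invPoch, hm]

lemma exists_norm_invPoch_le {q : ℂ} (hq1 : ‖q‖ < 1) : ∃ C, ∀ m, ‖invPoch q m‖ ≤ C := by
  obtain ⟨C, hC⟩ := (Metric.isBounded_range_of_tendsto _
    ((tendsto_qPochFin hq1 q).inv₀ (qpi_self_ne_zero hq1))).exists_norm_le
  refine ⟨C, fun m => ?_⟩
  by_cases hm : 0 ≤ m
  · rw [invPoch, if_pos hm]
    exact hC _ ⟨m.toNat, rfl⟩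
  · rw [invPoch, if_neg hm, norm_zero]
    exact (norm_nonneg _).trans (hC _ ⟨0, rfl⟩)

lemma exists_norm_qPochFin_le {q : ℂ} (hq1 : ‖q‖ < 1) : ∃ C, ∀ n, ‖qPochFin q q n‖ ≤ C := by
  obtain ⟨C, hC⟩ := (Metric.isBounded_range_of_tendsto _
    (tendsto_qPochFin hq1 q)).exists_norm_le
  exact ⟨C, fun n => hC _ ⟨n, rfl⟩⟩

lemma jtpTerm_succ {q z : ℂ} (hq : q ≠ 0) (hz : z ≠ 0) (k : ℤ) :
    jtpTerm q z (k + 1) = -(q ^ k * z) * jtpTerm q z k := by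
  have e : (k + 1) * (k + 1 - 1) / 2 = k * (k - 1) / 2 + k := by
    rw [← Int.add_mul_ediv_right _ _ (by norm_num : (2 : ℤ) ≠ 0)]
    congr 1
    ring
  rw [jtpTerm, jtpTerm, e, zpow_add₀ hq, zpow_add_one₀ hz, zpow_add_one₀ (by norm_num)]
  ring

lemma jtpTerm_ne_zero {q z : ℂ} (hq : q ≠ 0) (hz : z ≠ 0) (k : ℤ) : jtpTerm q z k ≠ 0 :=
  mul_ne_zero (mul_ne_zero (zpow_ne_zero _ (by norm_num)) (zpow_ne_zero _ hq)) (zpow_ne_zero _ hz)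

lemma summable_jtpTerm_nat {q z : ℂ} (hq : q ≠ 0) (hq1 : ‖q‖ < 1) (hz : z ≠ 0) :
    Summable fun k : ℕ => jtpTerm q z (k : ℤ) := by
  refine summable_of_ratio_test_tendsto_lt_one zero_lt_one
    (Eventually.of_forall fun k => jtpTerm_ne_zero hq hz _) ?_
  have h := (tendsto_pow_atTop_nhds_zero_of_lt_one (norm_nonneg q) hq1).mul_const ‖z‖
  rw [zero_mul] at h
  refine h.congr fun k => ?_
  have h0 := norm_ne_zero_iff.mpr (jtpTerm_ne_zero hq hz (k : ℤ))
  rw [Nat.cast_succ, jtpTerm_succ hq hz, norm_mul, mul_div_cancel_right₀ _ h0, norm_neg, norm_mul,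
    zpow_natCast, norm_pow]

lemma summable_jtpTerm_neg {q z : ℂ} (hq : q ≠ 0) (hq1 : ‖q‖ < 1) (hz : z ≠ 0) :
    Summable fun k : ℕ => jtpTerm q z (-(k : ℤ) - 1) := by
  refine summable_of_ratio_test_tendsto_lt_one zero_lt_one
    (Eventually.of_forall fun k => jtpTerm_ne_zero hq hz _) ?_
  have h := ((tendsto_pow_atTop_nhds_zero_of_lt_one (norm_nonneg q) hq1).comp
    (tendsto_add_atTop_nat 2)).mul_const ‖z‖⁻¹
  rw [zero_mul] at h
  refine h.congr fun k => ?_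
  have h0 := norm_ne_zero_iff.mpr (jtpTerm_ne_zero hq hz (-((k + 1 : ℕ) : ℤ) - 1))
  have e : -(k : ℤ) - 1 = (-((k + 1 : ℕ) : ℤ) - 1) + 1 := by push_cast; ring
  have e2 : (-((k + 1 : ℕ) : ℤ) - 1) = -((k + 2 : ℕ) : ℤ) := by push_cast; ring
  have hz' := norm_ne_zero_iff.mpr hz
  have hq' := norm_ne_zero_iff.mpr hq
  rw [e, jtpTerm_succ hq hz, norm_mul, norm_neg, norm_mul]
  rw [e2] at h0 ⊢
  rw [zpow_neg, zpow_natCast, norm_inv, norm_pow, Function.comp]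
  field_simp

/-- The finite form of the triple product; the sum over `k ∈ ℤ` is supported on `|k| ≤ n`. -/
lemma hasSum_finite_form {q z : ℂ} (hq : q ≠ 0) (hq1 : ‖q‖ < 1) (hz : z ≠ 0) (n : ℕ) :
    HasSum (fun k : ℤ => qPochFin q q (2 * n) * invPoch q (n + k) * invPoch q (n - k)
      * jtpTerm q z k) (qPochFin q z n * qPochFin q (q / z) n) := by
  induction n with
  | zero =>
    convert hasSum_single (0 : ℤ) ?_ using 1
    · simp [qPochFin, invPoch, jtpTerm]
    · intro k hk
      rcases lt_or_gt_of_ne hk with h | h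
      · rw [invPoch, if_neg (by simpa using h)]
        simp
      · have h' : invPoch q (((0 : ℕ) : ℤ) - k) = 0 := if_neg (by simpa using h)
        rw [h', mul_zero, zero_mul]
  | succ n ih =>
    -- The three shifted copies of the sum produced by
    -- `(1 - z q^n)(1 - q^{n+1}/z) = (1 + q^{2n+1}) - q^n z - q^{n+1}/z`.
    have h0 := ih.mul_left (1 + q ^ (2 * n + 1))
    have h1 := ((Equiv.subRight (1 : ℤ)).hasSum_iff.mpr ih).mul_left (-(q ^ n * z))
    have h2 := ((Equiv.addRight (1 : ℤ)).hasSum_iff.mpr ih).mul_left (-(q ^ (n + 1) / z))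
    convert (h0.add h1).add h2 using 1
    · rfl
    · funext k
      simp only [Function.comp, Equiv.subRight_apply, Equiv.coe_addRight]
      have t1 := jtpTerm_succ hq hz (k - 1)
      rw [sub_add_cancel] at t1
      have t2 := jtpTerm_succ hq hz k
      have a1 := invPoch_sub_one hq1 ((n : ℤ) + 1 + k)
      have a2 := invPoch_sub_one hq1 ((n : ℤ) + k)
      have b1 := invPoch_sub_one hq1 ((n : ℤ) + 1 - k)
      have b2 := invPoch_sub_one hq1 ((n : ℤ) - k)
      rw [show (n : ℤ) + 1 + k - 1 = n + k by ring] at a1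
      rw [show (n : ℤ) + 1 - k - 1 = n - k by ring] at b1
      rw [a1] at a2
      rw [b1] at b2
      rw [show 2 * (n + 1) = 2 * n + 1 + 1 by ring, qPochFin_succ, qPochFin_succ,
        show (n : ℤ) + (k - 1) = n + k - 1 by ring, show (n : ℤ) - (k - 1) = n + 1 - k by ring,
        show (n : ℤ) + (k + 1) = n + 1 + k by ring, show (n : ℤ) - (k + 1) = n - k - 1 by ring,
        a2, b2, a1, b1, t2]
      push_cast
      have hk : q ^ k ≠ 0 := zpow_ne_zero _ hq
      have t3 : jtpTerm q z (k - 1) = -(q / (q ^ k * z)) * jtpTerm q z k := by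
        rw [t1, zpow_sub_one₀ hq]
        field_simp
      rw [t3]
      simp only [zpow_add₀ hq, zpow_sub₀ hq, zpow_natCast, zpow_one]
      field_simp
      ring
    · rw [qPochFin_succ, qPochFin_succ]
      field_simp
      ring

theorem tsum_jtpTerm {q z : ℂ} (hq : q ≠ 0) (hq1 : ‖q‖ < 1) (hz : z ≠ 0)
    (hs : Summable (jtpTerm q z)) :
    ∑' k : ℤ, jtpTerm q z k = qpi q q * qpi q z * qpi q (q / z) := by
  obtain ⟨C, hC⟩ := exists_norm_invPoch_le hq1
  obtain ⟨D, hD⟩ := exists_norm_qPochFin_le hq1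
  have hC0 : 0 ≤ C := (norm_nonneg _).trans (hC 0)
  have hD0 : 0 ≤ D := (norm_nonneg _).trans (hD 0)
  have hne := qpi_self_ne_zero hq1
  have hlim : Tendsto (fun n : ℕ => ∑' k : ℤ, qPochFin q q (2 * n) * invPoch q (n + k)
      * invPoch q (n - k) * jtpTerm q z k) atTop
      (𝓝 (∑' k : ℤ, qpi q q * (qpi q q)⁻¹ * (qpi q q)⁻¹ * jtpTerm q z k)) := by
    refine tendsto_tsum_of_dominated_convergence (hs.norm.mul_left (D * C * C)) (fun k => ?_)
      (Eventually.of_forall fun n k => ?_)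
    · have c1 : Tendsto (fun n : ℕ => 2 * n) atTop atTop :=
        tendsto_id.const_mul_atTop' (by norm_num)
      have c2 : Tendsto (fun n : ℕ => (n : ℤ) + k) atTop atTop :=
        tendsto_atTop_add_const_right _ _ tendsto_natCast_atTop_atTop
      have c3 : Tendsto (fun n : ℕ => (n : ℤ) - k) atTop atTop :=
        tendsto_atTop_add_const_right _ (-k) tendsto_natCast_atTop_atTop
      exact ((((tendsto_qPochFin hq1 q).comp c1).mul ((tendsto_invPoch hq1).comp c2)).mul
        ((tendsto_invPoch hq1).comp c3)).mul_const _
    · rw [norm_mul, norm_mul, norm_mul]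
      gcongr
      · exact hD _
      · exact hC _
      · exact hC _
  have hlim2 := (tendsto_qPochFin hq1 z).mul (tendsto_qPochFin hq1 (q / z))
  have key := tendsto_nhds_unique hlim
    (hlim2.congr fun n => (hasSum_finite_form hq hq1 hz n).tsum_eq.symm)
  rw [tsum_mul_left, mul_inv_cancel₀ hne, one_mul] at key
  rw [mul_assoc, ← key, mul_inv_cancel_left₀ hne]

/-- Jacobi triple product identity: for `0<q<1` and `z ≠ 0`,
`Σ_{k=-∞}^∞ (-1)^k q^{k(k-1)/2} z^k = (q;q)_∞ (z;q)_∞ (q/z;q)_∞`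
(the bilateral sum being the sum of the two one-sided series). -/
theorem stmt12 (q : ℝ) (hq0 : 0 < q) (hq1 : q < 1) (z : ℂ) (hz : z ≠ 0) :
    Summable (fun k : ℕ => jtpTerm (q : ℂ) z (k : ℤ)) ∧
    Summable (fun k : ℕ => jtpTerm (q : ℂ) z (-(k : ℤ) - 1)) ∧
    (∑' k : ℕ, jtpTerm (q : ℂ) z (k : ℤ)) +
        (∑' k : ℕ, jtpTerm (q : ℂ) z (-(k : ℤ) - 1)) =
      qpi (q : ℂ) (q : ℂ) * qpi (q : ℂ) z * qpi (q : ℂ) ((q : ℂ) / z) := by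
  have hq : (q : ℂ) ≠ 0 := by exact_mod_cast hq0.ne'
  have hn : ‖(q : ℂ)‖ < 1 := by
    rw [Complex.norm_real, Real.norm_of_nonneg hq0.le]
    exact hq1
  have h1 := summable_jtpTerm_nat hq hn hz
  have h2 := summable_jtpTerm_neg hq hn hz
  have e : ∀ k : ℕ, -(k : ℤ) - 1 = -((k : ℤ) + 1) := fun k => by ring
  refine ⟨h1, h2, ?_⟩
  simp only [e] at h2 ⊢
  rw [← tsum_of_nat_of_neg_add_one h1 h2]
  exact tsum_jtpTerm hq hn hz (Summable.of_nat_of_neg_add_one h1 h2)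
end
end
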